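/- Let Λ = O[[T]] and let A be a finite-index ideal of Λ, Γ_n-coinvariants A_{Γ_n} = A ⊗_Λ Λ_n for Λ_n = Λ/J_n a quotient, and let I_n be a Λ_n-submodule of A_{Γ_n}. Then i_n(I_n) ⊆ Fitt_{Λ_n}(A_{Γ_n}/I_n), where i_n : A_{Γ_n} → Λ_n is the map induced by the inclusion A ⊆ Λ. -/

import Mathlib

/-!
The assertion reduces to power series over the principal ideal domain `O`: for every `a ∈ A` there
are generators `v` of `A` and a square matrix `M` with `M v ≡ 0` modulo `a` and `det M = a`.
Given this, any element of `In` is the class of some `a ∈ A`, the matrix `M` modulo `Jn` consists of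
relations between the images of `v` in the quotient by `In`, and its determinant is the class of
`a`, which is `iN` of the given element.

To find `M` (`exists_presentation`), note that finiteness of the quotient by `A` gives `X ^ k ∈ A`
and a nonzero constant `c ∈ A`. The image of `A` in `O⟦X⟧ / X ^ k ≅ O ^ k` is then free of rank `k`.
Lift a basis of it to `β₁, …, βₖ ∈ A` and let `Y` be the matrix of multiplication by `X`. This gives
`(X - Y) β = g X ^ k` for a vector `g`, and `a = ∑ qᵢ βᵢ + h X ^ k`. The matrix
`M = [X - Y, -g; q, h]` sends `(β, X ^ k)` to `(0, a)`. By Cramer's rule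
`det M * X ^ k = a * det (X - Y)`, and `det (X - Y) = X ^ k` because `Y` is conjugate, over the
fraction field of `O`, to the nilpotent shift matrix on `O ^ k`.
-/

/-- The 0-th Fitting ideal of a module `M` over a commutative ring `R`. -/
def fittingIdeal (R : Type*) [CommRing R] (M : Type*) [AddCommGroup M] [Module R M] :
    Ideal R :=
  Ideal.span { d : R | ∃ (n : ℕ) (π : ((Fin n → R) →ₗ[R] M))
    (A : Matrix (Fin n) (Fin n) R),
      Function.Surjective π ∧ (∀ i, π (A i) = 0) ∧ d = A.det }

section

open PowerSeries

/-- An element `a` of `A` is the determinant of a square matrix of relations among the images, in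
`A / (a)`, of generators of `A`. The generators are lifts `β` to `A` of an `O`-basis of the
image of `A` in `O⟦X⟧ / X ^ k ≅ O ^ k`, followed by `X ^ k`. -/
theorem exists_presentation {O : Type*} [CommRing O] [IsDomain O] [IsPrincipalIdealRing O]
    (A : Ideal O⟦X⟧) (k : ℕ) (hk : (X : O⟦X⟧) ^ k ∈ A) (c : O) (hc0 : c ≠ 0) (hc : C c ∈ A)
    (a : O⟦X⟧) (ha : a ∈ A) :
    ∃ (v : Fin k ⊕ Unit → O⟦X⟧) (M : Matrix (Fin k ⊕ Unit) (Fin k ⊕ Unit) O⟦X⟧),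
      Ideal.span (Set.range v) = A ∧ (∀ i, ∑ j, M i j * v j ∈ Ideal.span {a}) ∧ M.det = a := by
  classical
  let φ : O⟦X⟧ →ₗ[O] (Fin k → O) := LinearMap.pi fun i => coeff (i : ℕ)
  have hφ : ∀ f (i : Fin k), φ f i = coeff (i : ℕ) f := fun f i => rfl
  have hker : ∀ f, φ f = 0 → ∃ g, f = g * X ^ k := by
    intro f hf
    have : X ^ k ∣ f := X_pow_dvd_iff.2 fun m hm => by
      simpa [hφ] using congrFun hf ⟨m, hm⟩
    obtain ⟨g, rfl⟩ := this
    exact ⟨g, mul_comm _ _⟩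
  have hsurj : ∀ x : Fin k → O, ∃ f, φ f = x := by
    intro x
    refine ⟨PowerSeries.mk fun n => if h : n < k then x ⟨n, h⟩ else 0, ?_⟩
    ext i
    simp [hφ]
  let N : Submodule O (Fin k → O) := Submodule.map φ (A.restrictScalars O)
  have hcN : ∀ x : Fin k → O, c • x ∈ N := by
    intro x
    obtain ⟨f, rfl⟩ := hsurj x
    refine ⟨c • f, ?_, map_smul _ _ _⟩
    change c • f ∈ A
    rw [smul_eq_C_mul]
    exact A.mul_mem_right _ hc
  obtain ⟨m, bN⟩ := Submodule.basisOfPid (Pi.basisFun O (Fin k)) N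
  -- `c • O ^ k ⊆ N ⊆ O ^ k` forces the rank of `N` to be `k`.
  have hm : m = k := by
    have h1 : Module.finrank O N = m := by simpa using Module.finrank_eq_card_basis bN
    have h2 : Module.finrank O N ≤ k := by simpa using Submodule.finrank_le N
    have h3 : k ≤ Module.finrank O N := by
      let ψ : (Fin k → O) →ₗ[O] N := LinearMap.codRestrict N (c • LinearMap.id) hcN
      have hψ : Function.Injective ψ := by
        intro x y hxy
        have : c • x = c • y := congrArg Subtype.val hxy
        exact smul_right_injective _ hc0 this
      have : Module.Finite O N := Module.Finite.of_basis bN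
      simpa using LinearMap.finrank_le_finrank_of_injective hψ
    omega
  subst hm
  choose β hβA hβ using fun i => (bN i).2
  have hβA' : ∀ i, β i ∈ A := hβA
  have hN : ∀ x ∈ N, ∃ q : Fin m → O, x = ∑ i, q i • φ (β i) := by
    intro x hx
    refine ⟨fun i => bN.repr ⟨x, hx⟩ i, ?_⟩
    have := congrArg Subtype.val (bN.sum_repr ⟨x, hx⟩)
    rw [Submodule.coe_sum] at this
    simp only [hβ]
    exact this.symm
  have expand : ∀ x ∈ A, ∃ (q : Fin m → O) (g : O⟦X⟧),
      φ x = ∑ i, q i • φ (β i) ∧ x = ∑ i, C (q i) * β i + g * X ^ m := by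
    intro x hx
    obtain ⟨q, hq⟩ := hN (φ x) ⟨x, hx, rfl⟩
    obtain ⟨g, hg⟩ := hker (x - ∑ i, q i • β i) (by simp [hq])
    refine ⟨q, g, hq, ?_⟩
    simp only [← smul_eq_C_mul]
    rw [← hg]; ring
  -- `Y` is the matrix of multiplication by `X` on `N` in the basis `φ ∘ β`.
  choose Y g hY hg using fun i => expand (X * β i) (A.mul_mem_left _ (hβA' i))
  obtain ⟨q, h, -, hq⟩ := expand a ha
  choose Q hQ using fun i => hN (c • Pi.single i 1) (hcN _)
  let P : Matrix (Fin m) (Fin m) O := Matrix.of fun i => φ (β i)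
  -- `L` is the matrix of multiplication by `X` on `O ^ m`, acting on row vectors.
  let L : Matrix (Fin m) (Fin m) O := Matrix.of fun i j => if (i : ℕ) + 1 = j then 1 else 0
  let D : Matrix (Fin m) (Fin m) O⟦X⟧ :=
    (X : O⟦X⟧) • (1 : Matrix (Fin m) (Fin m) O⟦X⟧) - (Matrix.of Y).map (C : O →+* O⟦X⟧)
  -- `N` contains `c • O ^ k`, so `Q * P = c • 1` for some matrix `Q`.
  have hP : P.det ≠ 0 := by
    have : Matrix.of Q * P = c • 1 := by
      ext i j
      have := congrFun (hQ i) j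
      simp only [Finset.sum_apply, Pi.smul_apply, smul_eq_mul] at this
      simp only [Matrix.mul_apply, P, Matrix.of_apply, ← this, Matrix.smul_apply, Matrix.one_apply,
        Pi.single_apply, smul_eq_mul, eq_comm]
    have h2 := congrArg Matrix.det this
    rw [Matrix.det_mul, Matrix.det_smul, Matrix.det_one, mul_one] at h2
    intro h0
    rw [h0, mul_zero] at h2
    exact pow_ne_zero _ hc0 h2.symm
  have hPL : Matrix.of Y * P = P * L := by
    ext i j
    have h1 := congrFun (hY i) j
    simp only [Finset.sum_apply, Pi.smul_apply, smul_eq_mul, hφ] at h1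
    simp only [Matrix.mul_apply, P, L, Matrix.of_apply, hφ, ← h1]
    obtain ⟨j, hj⟩ := j
    cases j with
    | zero => simp
    | succ j =>
      rw [Finset.sum_eq_single ⟨j, by omega⟩]
      · simp [coeff_succ_X_mul]
      · intro b _ hb
        rw [if_neg, mul_zero]
        intro h; apply hb; ext; simpa using h
      · simp
  have hL : ((X : O⟦X⟧) • (1 : Matrix (Fin m) (Fin m) O⟦X⟧) - L.map (C : O →+* O⟦X⟧)).det =
      X ^ m := by
    rw [Matrix.det_of_isUpperTriangular]
    · simp [L]
    · intro i j hij
      have : j < i := hij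
      have h2 : ¬ ((i : ℕ) + 1 = j) := by have := Fin.lt_def.1 this; omega
      have h3 : i ≠ j := this.ne'
      simp [L, h2, h3]
  -- `Y` and `L` are conjugate over the fraction field, so `Y` has characteristic polynomial `X ^ m`.
  have hD : D.det = X ^ m := by
    have h1 : D * P.map (C : O →+* O⟦X⟧) = P.map (C : O →+* O⟦X⟧) *
        ((X : O⟦X⟧) • (1 : Matrix (Fin m) (Fin m) O⟦X⟧) - L.map (C : O →+* O⟦X⟧)) := by
      simp only [D, sub_mul, mul_sub, ← Matrix.map_mul, hPL]
      simp
    have h2 := congrArg Matrix.det h1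
    rw [Matrix.det_mul, Matrix.det_mul, hL, mul_comm] at h2
    refine mul_left_cancel₀ ?_ h2
    have : (P.map (C : O →+* O⟦X⟧)).det = C P.det := (RingHom.map_det (C : O →+* O⟦X⟧) P).symm
    rw [this]
    exact (map_ne_zero_iff _ C_injective).2 hP
  let M : Matrix (Fin m ⊕ Unit) (Fin m ⊕ Unit) O⟦X⟧ :=
    Matrix.fromBlocks D (Matrix.of fun i _ => - g i) (Matrix.of fun _ j => C (q j))
      (Matrix.of fun _ _ => h)
  have r1 : ∀ i, ∑ j, D i j * β j - g i * X ^ m = 0 := by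
    intro i
    have := hg i
    simp only [D, Matrix.sub_apply, sub_mul, Finset.sum_sub_distrib, Matrix.smul_apply,
      Matrix.one_apply, Matrix.map_apply, Matrix.of_apply]
    simp [this]
  refine ⟨Sum.elim β fun _ => X ^ m, M, ?_, ?_, ?_⟩
  · apply le_antisymm
    · rw [Ideal.span_le]
      rintro _ ⟨i | i, rfl⟩
      · exact hβA' i
      · exact hk
    · intro x hx
      obtain ⟨q, g, -, hx⟩ := expand x hx
      rw [hx]
      refine Ideal.add_mem _ (Ideal.sum_mem _ fun i _ => Ideal.mul_mem_left _ _ ?_)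
        (Ideal.mul_mem_left _ _ ?_)
      · exact Ideal.subset_span ⟨Sum.inl i, rfl⟩
      · exact Ideal.subset_span ⟨Sum.inr (), rfl⟩
  · rintro (i | i)
    · convert Ideal.zero_mem _
      simpa [M, sub_eq_add_neg] using r1 i
    · convert Ideal.mem_span_singleton_self a
      simpa [M] using hq.symm
  -- A form of Cramer's rule: taking determinants gives `M.det * X ^ m = X ^ m * a`.
  · have h1 : M * Matrix.fromBlocks 1 (Matrix.of fun i _ => β i) 0 (Matrix.of fun _ _ => X ^ m)
        = Matrix.fromBlocks D 0 (Matrix.of fun _ j => C (q j)) (Matrix.of fun _ _ => a) := by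
      rw [Matrix.fromBlocks_multiply]
      congr 1
      · simp
      · refine Matrix.ext fun i j => ?_
        simpa [Matrix.mul_apply, sub_eq_add_neg] using r1 i
      · simp
      · refine Matrix.ext fun i j => ?_
        simpa [Matrix.mul_apply] using hq.symm
    have h2 := congrArg Matrix.det h1
    rw [Matrix.det_mul, Matrix.det_fromBlocks_zero₂₁, Matrix.det_fromBlocks_zero₁₂, hD] at h2
    simp only [Matrix.det_one, one_mul, Matrix.det_unique, Matrix.of_apply] at h2
    rw [mul_comm] at h2
    exact mul_left_cancel₀ (pow_ne_zero _ X_ne_zero) h2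

/-- The integral closure of `ℤ_[p]` in `K` is a Dedekind domain, and all its maximal ideals lie over
the maximal ideal of `ℤ_[p]`, so there are finitely many of them. -/
theorem isPrincipalIdealRing_integralClosure (p : ℕ) [Fact p.Prime] (K : Type*) [Field K]
    [Algebra ℚ_[p] K] [FiniteDimensional ℚ_[p] K]
    [Algebra ℤ_[p] K] [IsScalarTower ℤ_[p] ℚ_[p] K] :
    IsPrincipalIdealRing (integralClosure ℤ_[p] K) := by
  have : CharZero ℚ_[p] := inferInstance
  have := integralClosure.isDedekindDomain ℤ_[p] ℚ_[p] K
  have : Module.Finite ℤ_[p] (integralClosure ℤ_[p] K) :=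
    IsIntegralClosure.finite ℤ_[p] ℚ_[p] K _
  apply IsPrincipalIdealRing.of_finite_maximals
  refine (Algebra.QuasiFinite.finite_primesOver (S := integralClosure ℤ_[p] K)
    (IsLocalRing.maximalIdeal ℤ_[p])).subset ?_
  intro I hI
  have hI : I.IsMaximal := hI
  refine ⟨hI.isPrime, ⟨?_⟩⟩
  exact (IsLocalRing.eq_maximalIdeal (Ideal.isMaximal_comap_of_isIntegral_of_isMaximal I)).symm

/-- Two powers of `X` agree modulo `A`, and `1 - X ^ (d + 1)` is a unit. -/
theorem exists_X_pow_mem {O : Type*} [CommRing O] (A : Ideal O⟦X⟧) [Finite (O⟦X⟧ ⧸ A)] :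
    ∃ k : ℕ, (X : O⟦X⟧) ^ k ∈ A := by
  obtain ⟨i, j, hij, h⟩ := Finite.exists_ne_map_eq_of_infinite
    fun n : ℕ => Ideal.Quotient.mk A (X ^ n)
  wlog hlt : i < j generalizing i j
  · exact this j i hij.symm h.symm (by omega)
  obtain ⟨d, rfl⟩ := Nat.exists_eq_add_of_lt hlt
  refine ⟨i, ?_⟩
  have h1 : (X : O⟦X⟧) ^ i * (1 - X ^ (d + 1)) ∈ A := by
    convert Ideal.Quotient.eq.1 h using 1; ring
  have h2 : IsUnit (1 - X ^ (d + 1) : O⟦X⟧) := by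
    rw [isUnit_iff_constantCoeff]; simp
  exact (Ideal.mul_unit_mem_iff_mem A h2).1 h1

theorem exists_C_mem {O : Type*} [CommRing O] [CharZero O] (A : Ideal O⟦X⟧)
    [Finite (O⟦X⟧ ⧸ A)] : ∃ c : O, c ≠ 0 ∧ C c ∈ A := by
  refine ⟨Nat.card (O⟦X⟧ ⧸ A), Nat.cast_ne_zero.2 Nat.card_pos.ne', ?_⟩
  rw [← Ideal.Quotient.eq_zero_iff_mem, map_natCast, map_natCast]
  have := card_nsmul_eq_zero' (x := (1 : O⟦X⟧ ⧸ A))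
  simpa using this

end

theorem exists_presentation_of_ringEquiv {O : Type*} [CommRing O] [IsDomain O]
    [IsPrincipalIdealRing O] [CharZero O] {Λ : Type*} [CommRing Λ] (e : Λ ≃+* PowerSeries O)
    (A : Ideal Λ) [Finite (Λ ⧸ A)] (a : Λ) (ha : a ∈ A) :
    ∃ (n : ℕ) (v : Fin n → Λ) (M : Matrix (Fin n) (Fin n) Λ),
      Ideal.span (Set.range v) = A ∧ (∀ i, ∑ j, M i j * v j ∈ Ideal.span {a}) ∧ M.det = a := by
  let B : Ideal (PowerSeries O) := A.comap e.symm
  have hB : B = A.map (e : Λ →+* PowerSeries O) := (Ideal.map_comap_of_equiv (I := A) e).symm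
  have : Finite (PowerSeries O ⧸ B) :=
    Finite.of_equiv _ (Ideal.quotientEquiv A B e hB).toEquiv
  obtain ⟨k, hk⟩ := exists_X_pow_mem B
  obtain ⟨c, hc0, hc⟩ := exists_C_mem B
  obtain ⟨v, M, hv, hM, hd⟩ := exists_presentation B k hk c hc0 hc (e a) (by simpa [B] using ha)
  let f := (Fintype.equivFin (Fin k ⊕ Unit)).symm
  refine ⟨_, fun i => e.symm (v (f i)), (M.submatrix f f).map e.symm, ?_, ?_, ?_⟩
  · have : B.map (e.symm : PowerSeries O →+* Λ) = A := by
      rw [hB, Ideal.map_map]; simp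
    rw [← this, ← hv, Ideal.map_span, ← Set.range_comp]
    congr 1
    exact f.surjective.range_comp (fun i => e.symm (v i))
  · intro i
    obtain ⟨r, hr⟩ := Ideal.mem_span_singleton'.1 (hM (f i))
    refine Ideal.mem_span_singleton'.2 ⟨e.symm r, ?_⟩
    apply e.injective
    simp only [map_mul, map_sum, e.apply_symm_apply, Matrix.map_apply, Matrix.submatrix_apply, hr]
    exact (f.sum_comp fun j => M (f i) j * v j).symm
  · have : ((M.submatrix f f).map e.symm).det = e.symm (M.submatrix f f).det :=
      (RingEquiv.map_det e.symm _).symm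
    rw [this, Matrix.det_submatrix_equiv_self, hd, e.symm_apply_apply]

/-- Let `Λ = O[[T]]`, `A` a finite-index ideal of `Λ`, `Λ_n = Λ/J_n` a quotient,
`A_{Γ_n} = A/J_nA` the coinvariants, and `I_n` a `Λ_n`-submodule of `A_{Γ_n}`.
If `i_n : A_{Γ_n} → Λ_n` is the map induced by the inclusion `A ⊆ Λ`
(i.e. `i_n ∘ p_n = π_n|_A`), then `i_n(I_n) ⊆ Fitt_{Λ_n}(A_{Γ_n}/I_n)`. -/
theorem stmt3 (p : ℕ) [Fact p.Prime] (K : Type*) [Field K]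
    [Algebra ℚ_[p] K] [FiniteDimensional ℚ_[p] K]
    [Algebra ℤ_[p] K] [IsScalarTower ℤ_[p] ℚ_[p] K]
    (Λ : Type*) [CommRing Λ]
    (e : Λ ≃+* PowerSeries (integralClosure ℤ_[p] K))
    (A : Ideal Λ) (hfin : Finite (Λ ⧸ A))
    (Jn : Ideal Λ)
    (iN : (↥A ⧸ (Jn • (⊤ : Submodule Λ ↥A))) →ₗ[Λ ⧸ Jn] (Λ ⧸ Jn))
    (hiN : ∀ a : ↥A, iN (Submodule.Quotient.mk a) = Ideal.Quotient.mk Jn (a : Λ))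
    (In : Submodule (Λ ⧸ Jn) (↥A ⧸ (Jn • (⊤ : Submodule Λ ↥A)))) :
    Submodule.map iN In ≤
      fittingIdeal (Λ ⧸ Jn) ((↥A ⧸ (Jn • (⊤ : Submodule Λ ↥A))) ⧸ In) := by
  have hPID := isPrincipalIdealRing_integralClosure p K
  have : CharZero (integralClosure ℤ_[p] K) :=
    by
    have : CharZero K := charZero_of_injective_algebraMap (algebraMap ℚ_[p] K).injective
    exact ⟨fun m n h => Nat.cast_injective (R := K) (by simpa using congrArg Subtype.val h)⟩
  rintro _ ⟨y, hy, rfl⟩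
  obtain ⟨⟨a, ha⟩, rfl⟩ := Submodule.Quotient.mk_surjective _ y
  rw [hiN]
  obtain ⟨n, v, M, hv, hM, hd⟩ := exists_presentation_of_ringEquiv e A a ha
  have hvA : ∀ i, v i ∈ A := fun i => hv ▸ Ideal.subset_span ⟨i, rfl⟩
  let w : Fin n → (↥A ⧸ (Jn • (⊤ : Submodule Λ ↥A))) ⧸ In :=
    fun i => Submodule.Quotient.mk (Submodule.Quotient.mk ⟨v i, hvA i⟩)
  have hw : ∀ r : Fin n → Λ, ∑ i, Ideal.Quotient.mk Jn (r i) • w i =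
      In.mkQ (Submodule.Quotient.mk (∑ i, r i • (⟨v i, hvA i⟩ : ↥A))) := by
    intro r
    rw [← Submodule.mkQ_apply, map_sum, map_sum]
    rfl
  have hsum : ∀ r : Fin n → Λ,
      ((∑ i, r i • (⟨v i, hvA i⟩ : ↥A) : ↥A) : Λ) = ∑ i, r i * v i := by
    intro r
    simp
  -- The relation matrix `M` over `Λ`, reduced modulo `Jn`, is a relation matrix for the quotient.
  refine Ideal.subset_span ⟨n, Fintype.linearCombination (Λ ⧸ Jn) w,
    M.map (Ideal.Quotient.mk Jn), ?_, ?_, ?_⟩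
  · intro z
    obtain ⟨z, rfl⟩ := Submodule.Quotient.mk_surjective _ z
    obtain ⟨⟨x, hx⟩, rfl⟩ := Submodule.Quotient.mk_surjective _ z
    obtain ⟨r, hr⟩ := (Submodule.mem_span_range_iff_exists_fun Λ).1
      (show x ∈ Ideal.span (Set.range v) by rwa [hv])
    refine ⟨fun i => Ideal.Quotient.mk Jn (r i), ?_⟩
    rw [Fintype.linearCombination_apply, hw]
    have : ∑ i, r i • (⟨v i, hvA i⟩ : ↥A) = ⟨x, hx⟩ := Subtype.ext ((hsum r).trans hr)
    rw [this]
    rfl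
  · intro i
    obtain ⟨s, hs⟩ := Ideal.mem_span_singleton'.1 (hM i)
    rw [Fintype.linearCombination_apply]
    have : ∑ j, M i j • (⟨v j, hvA j⟩ : ↥A) = s • ⟨a, ha⟩ :=
      Subtype.ext ((hsum (M i)).trans hs.symm)
    refine (hw (M i)).trans ?_
    rw [this, ← Module.Quotient.mk_smul_mk, map_smul]
    have h0 : In.mkQ (Submodule.Quotient.mk ⟨a, ha⟩) = 0 := (Submodule.Quotient.mk_eq_zero _).2 hy
    rw [h0, smul_zero]
  · exact (congrArg _ hd.symm).trans (RingHom.map_det _ _)
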